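/- (Theorem 2: non-trivial consensus on directed signed matrix-weighted networks.) Let A_{ij} be a signed matrix-weight assignment on N vertices satisfying Assumption 1 with partition V1 ∪ V2, and suppose Σ_{j∈Ω_i}|A_{ij}| is positive definite for every i ∈ V1, where Ω_i = {j : A_{ij} is negative semidefinite and nonzero}. Let θ ∈ ℝ^d with θ ≠ 0. Define C = max_{i∈V1} C_i with C_i = (1/2) λ_max[ (Σ_{j∈Ω_i}|A_{ij}|)⁻¹ ( Σ_{j∈N'_i}|A_{ji}| − Σ_{j∈N_i}|A_{ij}| ) ] (all eigenvalues of this matrix are real). Choose δ > C with δ > 0, and apply the design: δ_i = δ for i ∈ U = {i : Ω_i ≠ ∅} and δ_i = 0 otherwise; B_i = Σ_{j∈Ω_i}|A_{ij}| for i ∈ U and B_i = 0 otherwise; x_0 = (1 + 2/δ)θ. Let L_B = L + blockdiag(δ_1 B_1,…,δ_N B_N) and let b ∈ ℝ^{Nd} be the vector whose i-th d-dimensional block is δ_i B_i x_0. Then every differentiable function x : [0,∞) → ℝ^{Nd} satisfying x'(t) = −L_B x(t) + b for all t ≥ 0 converges: x(t) → 1_N ⊗ θ as t → ∞, i.e.,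 every block x_i(t) → θ. -/

import Mathlib

/-!
The error `y = x - 1 ⊗ θ` solves `y' = -L_B y`, because `|A_{ij}| - A_{ij}` equals `2|A_{ij}|` for
`j ∈ Ω_i` and vanishes otherwise, so that `L_B (1 ⊗ θ) = b` (`LB_consensus`). Hence
`(|y|²)' = -2 yᵀ L_B y`, and exponential decay follows once the quadratic form of the (non-symmetric)
matrix `L_B` is positive definite (`tendsto_of_form_pos`).

Positivity comes from the identity (`two_form_eq`)
`2 yᵀ L_B y = ∑_i ∑_{j≠i} e(A_{ij}; y_i, y_j) + ∑_i y_iᵀ (inDeg_i - outDeg_i + 2 δ_i B_i) y_i`,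
where `e(Q; u, v) = uᵀ|Q|u + vᵀ|Q|v - 2 uᵀQv = (u ∓ v)ᵀ|Q|(u ∓ v) ≥ 0`. The matrix in the second sum
is positive semidefinite on `V2` by in-degree domination, and positive definite on `V1`: with
`M = outDeg_i - inDeg_i`, the eigenvalue bound on `B_i⁻¹ M` says exactly that the generalized
eigenvalues of the pair `(2 δ B_i - M, B_i)` are positive (`posDef_of_charpoly`). So
`yᵀ L_B y = 0` forces `y_i = 0` on `V1`, and then `y = 0` on `V2` by following positive–negative
paths: across a definite edge, `e(A_{ij}; y_i, 0) = 0` gives `y_i = 0`.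
-/

open Matrix Filter
open scoped Classical

/-- `|Q|` for a real symmetric matrix that is positive semidefinite or negative
semidefinite: it equals `Q` in the first case and `-Q` in the second. -/
noncomputable def absM {d : ℕ} (Q : Matrix (Fin d) (Fin d) ℝ) : Matrix (Fin d) (Fin d) ℝ :=
  if Q.PosSemidef then Q else -Q

/-- A signed matrix-weight assignment: for `i ≠ j`, each weight `A i j` is symmetric
and either positive semidefinite or negative semidefinite. -/
def SignedWeights {N d : ℕ} (A : Fin N → Fin N → Matrix (Fin d) (Fin d) ℝ) : Prop :=
  ∀ i j : Fin N, i ≠ j → (A i j).IsSymm ∧ ((A i j).PosSemidef ∨ (-(A i j)).PosSemidef)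

/-- The signed matrix-weighted Laplacian: `(i,j)` block `−A_{ij}` for `j ≠ i`, and
`(i,i)` block `Σ_{k≠i}|A_{ik}|`. -/
noncomputable def Lap {N d : ℕ} (A : Fin N → Fin N → Matrix (Fin d) (Fin d) ℝ) :
    Matrix (Fin N × Fin d) (Fin N × Fin d) ℝ :=
  fun p q =>
    if p.1 = q.1 then (∑ k ∈ Finset.univ.erase p.1, absM (A p.1 k)) p.2 q.2
    else (-(A p.1 q.1)) p.2 q.2

/-- The block-diagonal `Nd × Nd` matrix with `d × d` diagonal blocks `D 1, …, D N`. -/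
def blockDiag' {N d : ℕ} (D : Fin N → Matrix (Fin d) (Fin d) ℝ) :
    Matrix (Fin N × Fin d) (Fin N × Fin d) ℝ :=
  fun p q => if p.1 = q.1 then D p.1 p.2 q.2 else 0

/-- Matrix-weighted in-degree `Σ_{k∈N_i}|A_{ik}|` of vertex `i`
(weights `A i k = 0` contribute nothing). -/
noncomputable def inDeg {N d : ℕ} (A : Fin N → Fin N → Matrix (Fin d) (Fin d) ℝ)
    (i : Fin N) : Matrix (Fin d) (Fin d) ℝ :=
  ∑ k ∈ Finset.univ.erase i, absM (A i k)

/-- Matrix-weighted out-degree `Σ_{k∈N'_i}|A_{ki}|` of vertex `i`. -/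
noncomputable def outDeg {N d : ℕ} (A : Fin N → Fin N → Matrix (Fin d) (Fin d) ℝ)
    (i : Fin N) : Matrix (Fin d) (Fin d) ℝ :=
  ∑ k ∈ Finset.univ.erase i, absM (A k i)

/-- A positive–negative path from `i` to `j`: a sequence `i = p 0, …, p m = j` with
`m ≥ 1` in which every traversed weight `A_{p(s+1), p(s)}` is positive or negative
definite. -/
def PNPath {N d : ℕ} (A : Fin N → Fin N → Matrix (Fin d) (Fin d) ℝ) (i j : Fin N) : Prop :=
  ∃ m : ℕ, 0 < m ∧ ∃ p : Fin (m + 1) → Fin N, p 0 = i ∧ p (Fin.last m) = j ∧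
    ∀ s : Fin m, (A (p s.succ) (p s.castSucc)).PosDef ∨ (-(A (p s.succ) (p s.castSucc))).PosDef

/-- Vertex `j` is in-degree-dominated. -/
def InDegDom {N d : ℕ} (A : Fin N → Fin N → Matrix (Fin d) (Fin d) ℝ) (j : Fin N) : Prop :=
  (inDeg A j - outDeg A j).PosSemidef

/-- Assumption 1: `{1,…,N} = V1 ∪ V2` disjointly, every `j ∈ V2` is reached from some
`i ∈ V1` by a positive–negative path, and every `j ∈ V2` is in-degree-dominated. -/
def Assumption1 {N d : ℕ} (A : Fin N → Fin N → Matrix (Fin d) (Fin d) ℝ)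
    (V1 V2 : Finset (Fin N)) : Prop :=
  V1 ∪ V2 = Finset.univ ∧ V1 ∩ V2 = ∅ ∧
    (∀ j ∈ V2, ∃ i ∈ V1, PNPath A i j) ∧ (∀ j ∈ V2, InDegDom A j)

/-- `Ω_i`: the set of (other) vertices `j` with `A_{ij}` negative semidefinite and nonzero. -/
noncomputable def OmegaSet {N d : ℕ} (A : Fin N → Fin N → Matrix (Fin d) (Fin d) ℝ)
    (i : Fin N) : Finset (Fin N) :=
  (Finset.univ.erase i).filter fun j => (-(A i j)).PosSemidef ∧ A i j ≠ 0

/-! ### Edge energies of semidefinite weights -/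

lemma absM_of_psd {d : ℕ} {Q : Matrix (Fin d) (Fin d) ℝ} (h : Q.PosSemidef) : absM Q = Q := if_pos h

lemma absM_of_neg_psd {d : ℕ} {Q : Matrix (Fin d) (Fin d) ℝ} (h : (-Q).PosSemidef) :
    absM Q = -Q := by
  unfold absM
  split_ifs with hQ
  · have h0 : Q = 0 := by
      rw [← hQ.trace_eq_zero_iff]
      have h1 := hQ.trace_nonneg
      have h2 := h.trace_nonneg
      rw [trace_neg] at h2
      linarith
    simp [h0]
  · rfl

lemma absM_psd {d : ℕ} {Q : Matrix (Fin d) (Fin d) ℝ} (h : Q.PosSemidef ∨ (-Q).PosSemidef) :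
    (absM Q).PosSemidef := by
  rcases h with h | h
  · rwa [absM_of_psd h]
  · rwa [absM_of_neg_psd h]

lemma absM_posDef {d : ℕ} {Q : Matrix (Fin d) (Fin d) ℝ} (h : Q.PosDef ∨ (-Q).PosDef) :
    (absM Q).PosDef := by
  rcases h with h | h
  · rwa [absM_of_psd h.posSemidef]
  · rwa [absM_of_neg_psd h.posSemidef]

lemma psd_form_nonneg {d : ℕ} {Q : Matrix (Fin d) (Fin d) ℝ} (h : Q.PosSemidef) (u : Fin d → ℝ) :
    0 ≤ u ⬝ᵥ Q *ᵥ u := by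
  simpa using h.dotProduct_mulVec_nonneg u

lemma pd_form_eq_zero {d : ℕ} {Q : Matrix (Fin d) (Fin d) ℝ} (h : Q.PosDef) {u : Fin d → ℝ}
    (hu : u ⬝ᵥ Q *ᵥ u ≤ 0) : u = 0 := by
  by_contra h0
  have := h.dotProduct_mulVec_pos h0
  simp only [star_trivial] at this
  linarith

/-- The edge energy `uᵀ|Q|u + vᵀ|Q|v - 2 uᵀQv`. For semidefinite `Q` it equals
`(u - v)ᵀ|Q|(u - v)` or `(u + v)ᵀ|Q|(u + v)`, according to the sign of `Q`. -/
noncomputable def edgeEnergy {d : ℕ} (Q : Matrix (Fin d) (Fin d) ℝ) (u v : Fin d → ℝ) : ℝ :=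
  u ⬝ᵥ absM Q *ᵥ u + v ⬝ᵥ absM Q *ᵥ v - 2 * (u ⬝ᵥ Q *ᵥ v)

lemma edgeEnergy_nonneg {d : ℕ} {Q : Matrix (Fin d) (Fin d) ℝ} (hs : Q.IsSymm)
    (h : Q.PosSemidef ∨ (-Q).PosSemidef) (u v : Fin d → ℝ) : 0 ≤ edgeEnergy Q u v := by
  have hc : v ⬝ᵥ Q *ᵥ u = u ⬝ᵥ Q *ᵥ v := by
    rw [dotProduct_mulVec, ← mulVec_transpose, hs.eq, dotProduct_comm]
  unfold edgeEnergy
  rcases h with h | h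
  · have := psd_form_nonneg h (u - v)
    rw [absM_of_psd h]
    simp only [mulVec_sub, dotProduct_sub, sub_dotProduct] at this
    linarith
  · have := psd_form_nonneg h (u + v)
    rw [absM_of_neg_psd h]
    simp only [mulVec_add, dotProduct_add, add_dotProduct, neg_mulVec, dotProduct_neg] at this ⊢
    linarith

/-! ### The generalized eigenvalue bound -/

/-- A Hermitian `P` is positive definite if all generalized eigenvalues of the pair `(P, B)`, with
`B` positive definite, are positive: factor `B = Rᵀ R` and diagonalize `R⁻ᵀ P R⁻¹`. -/
lemma posDef_of_generalized_eigenvalues {d : ℕ} {P B : Matrix (Fin d) (Fin d) ℝ}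
    (hP : P.IsHermitian) (hB : B.PosDef)
    (h : ∀ (ν : ℝ) (w : Fin d → ℝ), w ≠ 0 → P *ᵥ w = ν • (B *ᵥ w) → 0 < ν) : P.PosDef := by
  obtain ⟨R, hR, rfl⟩ : ∃ R : Matrix (Fin d) (Fin d) ℝ, IsUnit R ∧ B = star R * R := by
    open scoped MatrixOrder in
    obtain ⟨R, hR⟩ := CStarAlgebra.nonneg_iff_eq_star_mul_self.mp hB.posSemidef.nonneg
    refine ⟨R, ?_, hR⟩
    have := hB.isUnit
    rw [hR, isUnit_iff_isUnit_det, det_mul] at this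
    rw [isUnit_iff_isUnit_det]
    exact isUnit_of_mul_isUnit_right this
  have hdet : IsUnit R.det := (isUnit_iff_isUnit_det R).1 hR
  have hRi : IsUnit R⁻¹ := by
    rw [isUnit_iff_isUnit_det]; exact isUnit_nonsing_inv_det R hdet
  rw [← IsUnit.posDef_star_left_conjugate_iff hRi]
  have hT : (star R⁻¹ * P * R⁻¹).IsHermitian := isHermitian_conjTranspose_mul_mul _ hP
  rw [hT.posDef_iff_eigenvalues_pos]
  intro i
  set v : Fin d → ℝ := ⇑(hT.eigenvectorBasis i) with hv
  have hv0 : v ≠ 0 := by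
    intro h0
    apply (hT.eigenvectorBasis).toBasis.ne_zero i
    ext k
    simpa using congrFun h0 k
  have hev := hT.mulVec_eigenvectorBasis i
  rw [← hv] at hev
  have hRv : R *ᵥ (R⁻¹ *ᵥ v) = v := by
    rw [mulVec_mulVec, mul_nonsing_inv R hdet, one_mulVec]
  refine h _ (R⁻¹ *ᵥ v) (fun h0 => hv0 ?_) ?_
  · rw [← hRv, h0, mulVec_zero]
  · have h1 := congrArg (fun z => star R *ᵥ z) hev
    have h2 : star R * star R⁻¹ = 1 := by
      rw [← star_mul, nonsing_inv_mul R hdet, star_one]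
    simp only [mulVec_mulVec, mulVec_smul] at h1
    rw [← mul_assoc, ← mul_assoc, h2, one_mul] at h1
    rw [mulVec_mulVec, h1, ← mulVec_mulVec (v := R⁻¹ *ᵥ v), hRv]

/-- If `δ > μ / 2` for every eigenvalue `μ` of `B⁻¹ M`, then `2 δ B - M` is positive definite. -/
lemma posDef_of_charpoly {d : ℕ} {M B : Matrix (Fin d) (Fin d) ℝ} (hM : M.IsHermitian)
    (hB : B.PosDef) {δ : ℝ} (h : ∀ μ : ℝ, (B⁻¹ * M).charpoly.IsRoot μ → μ / 2 < δ) :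
    ((2 * δ) • B - M).PosDef := by
  have hdet : IsUnit B.det := (isUnit_iff_isUnit_det B).1 hB.isUnit
  refine posDef_of_generalized_eigenvalues ?_ hB fun ν w hw hν => ?_
  · refine IsHermitian.sub ?_ hM
    rw [IsHermitian, conjTranspose_smul, hB.isHermitian.eq, star_trivial]
  · have hr : (B⁻¹ * M).charpoly.IsRoot (2 * δ - ν) := by
      rw [Polynomial.IsRoot, eval_charpoly, ← exists_mulVec_eq_zero_iff]
      refine ⟨w, hw, ?_⟩
      have hMw : M *ᵥ w = (2 * δ - ν) • (B *ᵥ w) := by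
        rw [sub_mulVec, smul_mulVec] at hν
        rw [sub_smul, ← hν]; abel
      rw [sub_mulVec, ← mulVec_mulVec, hMw, mulVec_smul, mulVec_mulVec, nonsing_inv_mul B hdet,
        one_mulVec, scalar_apply, ← smul_one_eq_diagonal, smul_mulVec, one_mulVec, sub_self]
    linarith [h _ hr]

/-! ### Exponential decay for a positive definite form -/

/-- A quadratic form positive off the origin dominates a multiple of `yᵀ y`. -/
lemma exists_form_bound {n : Type*} [Fintype n] (L : Matrix n n ℝ)
    (hL : ∀ y : n → ℝ, y ≠ 0 → 0 < y ⬝ᵥ L *ᵥ y) :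
    ∃ c > 0, ∀ y : n → ℝ, c * (y ⬝ᵥ y) ≤ y ⬝ᵥ L *ᵥ y := by
  have hcont : Continuous fun y : n → ℝ => y ⬝ᵥ L *ᵥ y := by fun_prop
  have hcont' : Continuous fun y : n → ℝ => y ⬝ᵥ y := by fun_prop
  let K : Set (n → ℝ) := {y | y ⬝ᵥ y = 1}
  have hK : IsCompact K := by
    refine (isCompact_closedBall (0 : n → ℝ) 1).of_isClosed_subset
      (isClosed_eq hcont' continuous_const) fun y hy => ?_
    rw [mem_closedBall_zero_iff, pi_norm_le_iff_of_nonneg zero_le_one]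
    intro i
    have h1 : y i * y i ≤ y ⬝ᵥ y :=
      Finset.single_le_sum (f := fun i => y i * y i) (fun j _ => mul_self_nonneg _)
        (Finset.mem_univ i)
    have h2 : y ⬝ᵥ y = 1 := hy
    rw [Real.norm_eq_abs, abs_le]
    constructor <;> nlinarith
  have hscale : ∀ y : n → ℝ, y ≠ 0 → ∃ s : ℝ, ∃ z ∈ K, y = s • z := by
    intro y hy
    have hpos : 0 < y ⬝ᵥ y :=
      lt_of_le_of_ne (Finset.sum_nonneg fun i _ => mul_self_nonneg (y i))
        fun h => hy (dotProduct_self_eq_zero.1 h.symm)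
    have hs : √(y ⬝ᵥ y) ≠ 0 := (Real.sqrt_pos.2 hpos).ne'
    refine ⟨√(y ⬝ᵥ y), (√(y ⬝ᵥ y))⁻¹ • y, ?_, ?_⟩
    · change _ ⬝ᵥ _ = (1 : ℝ)
      rw [smul_dotProduct, dotProduct_smul, smul_eq_mul, smul_eq_mul, ← mul_assoc, ← mul_inv,
        Real.mul_self_sqrt hpos.le, inv_mul_cancel₀ hpos.ne']
    · rw [smul_smul, mul_inv_cancel₀ hs, one_smul]
  rcases K.eq_empty_or_nonempty with hKe | hKn
  · refine ⟨1, one_pos, fun y => ?_⟩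
    by_cases hy : y = 0
    · simp [hy]
    · obtain ⟨s, z, hz, -⟩ := hscale y hy
      simp [hKe] at hz
  · obtain ⟨w, hw, hmin⟩ := hK.exists_isMinOn hKn hcont.continuousOn
    have hw0 : w ≠ 0 := by
      rintro rfl
      simp [K] at hw
    refine ⟨_, hL w hw0, fun y => ?_⟩
    by_cases hy : y = 0
    · simp [hy]
    · obtain ⟨s, z, hz, rfl⟩ := hscale y hy
      have h1 : w ⬝ᵥ L *ᵥ w ≤ z ⬝ᵥ L *ᵥ z := hmin hz
      have h2 : z ⬝ᵥ z = 1 := hz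
      simp only [mulVec_smul, smul_dotProduct, dotProduct_smul, smul_eq_mul, h2]
      nlinarith [mul_self_nonneg s]

/-- If the quadratic form of `L` is positive definite and `L v = b`, then every solution of
`x' = -L x + b` converges to `v`: with `c` as in `exists_form_bound`, the function
`exp (2 c t) |x t - v|²` is nonincreasing. -/
lemma tendsto_of_form_pos {n : Type*} [Fintype n] (L : Matrix n n ℝ)
    (hL : ∀ y : n → ℝ, y ≠ 0 → 0 < y ⬝ᵥ L *ᵥ y) (b v : n → ℝ) (hv : L *ᵥ v = b)
    (x : ℝ → n → ℝ) (hx : ∀ t : ℝ, 0 ≤ t → HasDerivAt x (-(L *ᵥ x t) + b) t) :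
    Tendsto x atTop (nhds v) := by
  obtain ⟨c, hc, hcL⟩ := exists_form_bound L hL
  let V : ℝ → ℝ := fun t => (x t - v) ⬝ᵥ (x t - v)
  have hV : ∀ t, 0 ≤ t → HasDerivAt V (-2 * ((x t - v) ⬝ᵥ L *ᵥ (x t - v))) t := by
    intro t ht
    have h1 : ∀ i, HasDerivAt (fun s => x s i - v i) (-(L *ᵥ (x t - v)) i) t := by
      intro i
      have h0 : -(L *ᵥ (x t - v)) i = (-(L *ᵥ x t) + b) i := by
        simp only [mulVec_sub, hv, Pi.sub_apply, Pi.add_apply, Pi.neg_apply]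
        ring
      rw [h0]
      exact (hasDerivAt_pi.1 (hx t ht) i).sub_const (v i)
    have h2 := HasDerivAt.fun_sum (u := Finset.univ) fun i _ => (h1 i).mul (h1 i)
    refine h2.congr_deriv ?_
    simp only [dotProduct, Finset.mul_sum, Pi.sub_apply]
    refine Finset.sum_congr rfl fun i _ => ?_
    ring
  let W : ℝ → ℝ := fun t => Real.exp (2 * c * t) * V t
  have hW : ∀ t, 0 ≤ t → HasDerivAt W (Real.exp (2 * c * t) * (2 * c) * V t +
      Real.exp (2 * c * t) * (-2 * ((x t - v) ⬝ᵥ L *ᵥ (x t - v)))) t := by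
    intro t ht
    have h1 : HasDerivAt (fun s : ℝ => 2 * c * s) (2 * c) t := by
      simpa using (hasDerivAt_id t).const_mul (2 * c)
    exact h1.exp.mul (hV t ht)
  have hanti : AntitoneOn W (Set.Ici 0) := by
    refine antitoneOn_of_deriv_nonpos (convex_Ici 0)
      (fun t ht => (hW t ht).continuousAt.continuousWithinAt) ?_ ?_
    · intro t ht
      rw [interior_Ici] at ht
      exact (hW t ht.le).differentiableAt.differentiableWithinAt
    · intro t ht
      rw [interior_Ici] at ht
      rw [(hW t ht.le).deriv]
      have h1 := hcL (x t - v)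
      have h2 := Real.exp_pos (2 * c * t)
      change Real.exp (2 * c * t) * (2 * c) * ((x t - v) ⬝ᵥ (x t - v)) + _ ≤ 0
      nlinarith
  have hbound : ∀ t, 0 ≤ t → V t ≤ V 0 * Real.exp (-(2 * c * t)) := by
    intro t ht
    have h1 : Real.exp (2 * c * t) * V t ≤ Real.exp (2 * c * 0) * V 0 :=
      hanti Set.self_mem_Ici ht ht
    rw [mul_zero, Real.exp_zero, one_mul] at h1
    rw [Real.exp_neg, ← div_eq_mul_inv, le_div_iff₀ (Real.exp_pos _)]
    linarith
  have hlim : Tendsto (fun t : ℝ => V 0 * Real.exp (-(2 * c * t))) atTop (nhds 0) := by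
    have h1 : Tendsto (fun t : ℝ => 2 * c * t) atTop atTop :=
      tendsto_id.const_mul_atTop (by positivity)
    simpa using (Real.tendsto_exp_neg_atTop_nhds_zero.comp h1).const_mul (V 0)
  rw [tendsto_pi_nhds]
  intro i
  have hsq : Tendsto (fun t => (x t i - v i) ^ 2) atTop (nhds 0) := by
    refine squeeze_zero' (Eventually.of_forall fun t => sq_nonneg _) ?_ hlim
    filter_upwards [eventually_ge_atTop 0] with t ht
    refine le_trans ?_ (hbound t ht)
    have := Finset.single_le_sum (f := fun i => (x t - v) i * (x t - v) i)
      (fun j _ => mul_self_nonneg _) (Finset.mem_univ i)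
    simpa [sq, V, dotProduct] using this
  have habs : Tendsto (fun t => x t i - v i) atTop (nhds 0) := by
    have h1 := hsq.sqrt
    simp only [Real.sqrt_sq_eq_abs, Real.sqrt_zero] at h1
    exact (tendsto_zero_iff_abs_tendsto_zero _).2 h1
  simpa using habs.add_const (v i)

/-! ### The block structure of `L_B` -/

/-- The `i`-th block of `L_B y`. -/
lemma LB_mulVec {N d : ℕ} (A : Fin N → Fin N → Matrix (Fin d) (Fin d) ℝ)
    (D : Fin N → Matrix (Fin d) (Fin d) ℝ) (y : Fin N × Fin d → ℝ) (i : Fin N) :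
    (fun k => ((Lap A + blockDiag' D) *ᵥ y) (i, k)) =
      inDeg A i *ᵥ (fun k => y (i, k))
        - ∑ j ∈ Finset.univ.erase i, A i j *ᵥ (fun k => y (j, k))
        + D i *ᵥ (fun k => y (i, k)) := by
  funext k
  have h1 : (Lap A *ᵥ y) (i, k) = (inDeg A i *ᵥ (fun k => y (i, k))) k
      - (∑ j ∈ Finset.univ.erase i, A i j *ᵥ (fun k => y (j, k))) k := by
    simp only [mulVec, dotProduct, Fintype.sum_prod_type, Finset.sum_apply]
    rw [← Finset.add_sum_erase _ _ (Finset.mem_univ i), sub_eq_add_neg, ← Finset.sum_neg_distrib]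
    congr 1
    · simp [Lap, inDeg]
    · refine Finset.sum_congr rfl fun j hj => ?_
      have hij : i ≠ j := (Finset.ne_of_mem_erase hj).symm
      simp [Lap, hij]
  have h2 : (blockDiag' D *ᵥ y) (i, k) = (D i *ᵥ (fun k => y (i, k))) k := by
    simp only [mulVec, dotProduct, Fintype.sum_prod_type]
    rw [Finset.sum_eq_single i]
    · simp [_root_.blockDiag']
    · intro j _ hj
      simp [_root_.blockDiag', hj.symm]
    · simp
  rw [add_mulVec, Pi.add_apply, h1, h2]
  simp

lemma two_form_eq {N d : ℕ} (A : Fin N → Fin N → Matrix (Fin d) (Fin d) ℝ)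
    (D : Fin N → Matrix (Fin d) (Fin d) ℝ) (y : Fin N × Fin d → ℝ) :
    2 * (y ⬝ᵥ (Lap A + blockDiag' D) *ᵥ y) =
      ∑ i, ∑ j ∈ Finset.univ.erase i, edgeEnergy (A i j) (fun k => y (i, k)) (fun k => y (j, k))
      + ∑ i, (fun k => y (i, k)) ⬝ᵥ
          (inDeg A i - outDeg A i + (2 : ℝ) • D i) *ᵥ (fun k => y (i, k)) := by
  have h1 : y ⬝ᵥ (Lap A + blockDiag' D) *ᵥ y = ∑ i, (fun k => y (i, k)) ⬝ᵥ
      (fun k => ((Lap A + blockDiag' D) *ᵥ y) (i, k)) := by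
    simp only [dotProduct, Fintype.sum_prod_type]
  have hout : ∑ i, (fun k => y (i, k)) ⬝ᵥ outDeg A i *ᵥ (fun k => y (i, k)) =
      ∑ i, ∑ j ∈ Finset.univ.erase i,
        (fun k => y (j, k)) ⬝ᵥ absM (A i j) *ᵥ (fun k => y (j, k)) := by
    simp only [outDeg, sum_mulVec, dotProduct_sum]
    refine Finset.sum_comm' fun i j => ?_
    simp [eq_comm]
  have hin : ∀ i, (fun k => y (i, k)) ⬝ᵥ inDeg A i *ᵥ (fun k => y (i, k)) =
      ∑ j ∈ Finset.univ.erase i,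
        (fun k => y (i, k)) ⬝ᵥ absM (A i j) *ᵥ (fun k => y (i, k)) := by
    intro i
    simp only [inDeg, sum_mulVec, dotProduct_sum]
  rw [h1, Finset.sum_congr rfl fun i _ => congrArg ((fun k => y (i, k)) ⬝ᵥ ·) (LB_mulVec A D y i)]
  simp only [edgeEnergy, dotProduct_add, dotProduct_sub, dotProduct_sum, add_mulVec,
    sub_mulVec, smul_mulVec, dotProduct_smul, Finset.sum_add_distrib, Finset.sum_sub_distrib,
    smul_eq_mul, ← Finset.mul_sum, hout, hin]
  ring

/-- `∑_{j≠i} (|A_{ij}| - A_{ij}) = 2 ∑_{j∈Ω_i} |A_{ij}|`. -/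
lemma inDeg_sub_sum_eq {N d : ℕ} {A : Fin N → Fin N → Matrix (Fin d) (Fin d) ℝ}
    (hA : SignedWeights A) (i : Fin N) :
    inDeg A i - ∑ j ∈ Finset.univ.erase i, A i j =
      (2 : ℝ) • ∑ j ∈ OmegaSet A i, absM (A i j) := by
  rw [inDeg, ← Finset.sum_sub_distrib, OmegaSet, Finset.sum_filter, Finset.smul_sum]
  refine Finset.sum_congr rfl fun j hj => ?_
  split_ifs with h
  · rw [absM_of_neg_psd h.1, two_smul]; abel
  · rcases (hA i j (Finset.ne_of_mem_erase hj).symm).2 with hp | hn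
    · rw [absM_of_psd hp]; simp
    · have h0 : A i j = 0 := by
        by_contra h0
        exact h ⟨hn, h0⟩
      rw [absM_of_neg_psd hn, h0]; simp

/-- The consensus vector `1 ⊗ θ` is the equilibrium: `δ_i B_i (1 + 2 / δ) θ = (2 B_i + δ_i B_i) θ`,
also when `δ_i = 0`, since then `B_i = 0`. -/
lemma LB_consensus {N d : ℕ} {A : Fin N → Fin N → Matrix (Fin d) (Fin d) ℝ}
    (hA : SignedWeights A) {δ : ℝ} (hδ : 0 < δ) (θ : Fin d → ℝ)
    {δi : Fin N → ℝ} (hδi : ∀ i, δi i = if (OmegaSet A i).Nonempty then δ else 0)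
    {B : Fin N → Matrix (Fin d) (Fin d) ℝ} (hB : ∀ i, B i = ∑ j ∈ OmegaSet A i, absM (A i j)) :
    ((Lap A + blockDiag' fun i => δi i • B i) *ᵥ fun p => θ p.2) =
      fun p => ((δi p.1 • B p.1) *ᵥ ((1 + 2 / δ) • θ)) p.2 := by
  funext ⟨i, k⟩
  refine (congrFun (LB_mulVec A _ _ i) k).trans ?_
  refine congrFun (?_ : _ = (δi i • B i) *ᵥ ((1 + 2 / δ) • θ)) k
  change inDeg A i *ᵥ θ - ∑ j ∈ Finset.univ.erase i, A i j *ᵥ θ + (δi i • B i) *ᵥ θ = _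
  rw [← sum_mulVec, ← sub_mulVec, inDeg_sub_sum_eq hA, ← hB]
  rw [add_smul, mulVec_add, one_smul, add_comm]
  congr 1
  simp only [smul_mulVec, mulVec_smul, smul_smul]
  by_cases h : (OmegaSet A i).Nonempty
  · rw [hδi, if_pos h]
    congr 1
    field_simp
  · have h0 : B i = 0 := by
      rw [hB, Finset.not_nonempty_iff_eq_empty.1 h, Finset.sum_empty]
    simp [h0]

lemma isHermitian_outDeg_sub_inDeg {N d : ℕ} {A : Fin N → Fin N → Matrix (Fin d) (Fin d) ℝ}
    (hA : SignedWeights A) (i : Fin N) : (outDeg A i - inDeg A i).IsHermitian := by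
  refine IsHermitian.sub (PosSemidef.isHermitian ?_) (PosSemidef.isHermitian ?_)
  · exact posSemidef_sum _ fun j hj => absM_psd (hA j i (Finset.ne_of_mem_erase hj)).2
  · exact posSemidef_sum _ fun j hj => absM_psd (hA i j (Finset.ne_of_mem_erase hj).symm).2

/-! ### Propagation along paths and consensus -/

/-- Vanishing of all edge energies propagates zero blocks along positive–negative paths. -/
lemma eq_zero_of_PNPath {N d : ℕ} {A : Fin N → Fin N → Matrix (Fin d) (Fin d) ℝ}
    {u : Fin N → Fin d → ℝ} (hE : ∀ i j, i ≠ j → edgeEnergy (A i j) (u i) (u j) ≤ 0)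
    {i j : Fin N} (hp : PNPath A i j) (hi : u i = 0) : u j = 0 := by
  obtain ⟨m, -, p, h0, hm, hs⟩ := hp
  have key : ∀ s : Fin (m + 1), u (p s) = 0 := by
    intro s
    induction s using Fin.induction with
    | zero => rw [h0, hi]
    | succ s ih =>
      -- A path may traverse a definite diagonal weight `A i i`; such a step does not move.
      by_cases hne : p s.succ = p s.castSucc
      · rw [hne, ih]
      · have h1 := hE _ _ hne
        rw [ih] at h1
        refine pd_form_eq_zero (absM_posDef (hs s)) ?_
        simpa [edgeEnergy] using h1
  rw [← hm]
  exact key _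

/-- Theorem 2: non-trivial consensus on directed signed
matrix-weighted networks. The bound `δ > C = max_{i∈V1} C_i`, with
`C_i = ½ λ_max[(Σ_{j∈Ω_i}|A_{ij}|)⁻¹(Σ|A_{ji}| − Σ|A_{ij}|)]`, is expressed by
requiring `δ > μ/2` for every (real) eigenvalue `μ` of each of these matrices —
all of whose eigenvalues are real. -/
theorem stmt6 (N d : ℕ) (hN : 1 ≤ N) (hd : 1 ≤ d)
    (A : Fin N → Fin N → Matrix (Fin d) (Fin d) ℝ) (hA : SignedWeights A)
    (V1 V2 : Finset (Fin N)) (hAss : Assumption1 A V1 V2)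
    (hPD : ∀ i ∈ V1, (∑ j ∈ OmegaSet A i, absM (A i j)).PosDef)
    (θ : Fin d → ℝ) (hθ : θ ≠ 0)
    (δ : ℝ) (hδ : 0 < δ)
    (hδC : ∀ i ∈ V1, ∀ μ : ℝ,
      (((∑ j ∈ OmegaSet A i, absM (A i j))⁻¹ *
        (outDeg A i - inDeg A i)).charpoly).IsRoot μ → μ / 2 < δ)
    (δi : Fin N → ℝ) (hδi : ∀ i, δi i = if (OmegaSet A i).Nonempty then δ else 0)
    (B : Fin N → Matrix (Fin d) (Fin d) ℝ)
    (hB : ∀ i, B i = ∑ j ∈ OmegaSet A i, absM (A i j))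
    (x₀ : Fin d → ℝ) (hx₀ : x₀ = (1 + 2 / δ) • θ)
    (LB : Matrix (Fin N × Fin d) (Fin N × Fin d) ℝ)
    (hLB : LB = Lap A + blockDiag' fun i => δi i • B i)
    (b : Fin N × Fin d → ℝ) (hb : b = fun p => ((δi p.1 • B p.1).mulVec x₀) p.2) :
    ∀ x : ℝ → (Fin N × Fin d → ℝ),
      (∀ t : ℝ, 0 ≤ t → HasDerivAt x (-(LB.mulVec (x t)) + b) t) →
      Tendsto x atTop (nhds fun p => θ p.2) := by
  intro x hx
  subst hLB hb hx₀
  refine tendsto_of_form_pos _ ?_ _ _ (LB_consensus hA hδ θ hδi hB) x hx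
  obtain ⟨hU, -, hpath, hdom⟩ := hAss
  intro y hy
  set u : Fin N → Fin d → ℝ := fun i k => y (i, k) with hu
  have hform := two_form_eq A (fun i => δi i • B i) y
  have hE : ∀ i, ∀ j ∈ Finset.univ.erase i, 0 ≤ edgeEnergy (A i j) (u i) (u j) := by
    intro i j hj
    have := hA i j (Finset.ne_of_mem_erase hj).symm
    exact edgeEnergy_nonneg this.1 this.2 _ _
  have hV1 : ∀ i ∈ V1, (inDeg A i - outDeg A i + (2 : ℝ) • δi i • B i).PosDef := by
    intro i hi
    -- The zero matrix is not positive definite because `d ≥ 1`.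
    have hne : (OmegaSet A i).Nonempty := by
      by_contra h0
      have := hPD i hi
      rw [Finset.not_nonempty_iff_eq_empty.1 h0, Finset.sum_empty] at this
      exact lt_irrefl _ (this.diag_pos (i := ⟨0, hd⟩))
    have := posDef_of_charpoly (isHermitian_outDeg_sub_inDeg hA i) (hPD i hi) (hδC i hi)
    rw [hδi, if_pos hne, hB, smul_smul]
    convert this using 1
    abel
  have hcover : ∀ i, i ∈ V1 ∨ i ∈ V2 := fun i => by
    rw [← Finset.mem_union, hU]; exact Finset.mem_univ i
  have hD : ∀ i, 0 ≤ u i ⬝ᵥ (inDeg A i - outDeg A i + (2 : ℝ) • δi i • B i) *ᵥ u i := by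
    intro i
    refine psd_form_nonneg ?_ _
    rcases hcover i with hi | hi
    · exact (hV1 i hi).posSemidef
    · refine PosSemidef.add (hdom i hi) (PosSemidef.smul (PosSemidef.smul ?_ ?_) zero_le_two)
      · rw [hB]
        refine posSemidef_sum _ fun j hj => absM_psd (Or.inr ?_)
        exact (Finset.mem_filter.1 hj).2.1
      · rw [hδi]; split_ifs
        exacts [hδ.le, le_rfl]
  have hsE := Finset.sum_nonneg fun i (_ : i ∈ Finset.univ) => Finset.sum_nonneg (hE i)
  have hsD := Finset.sum_nonneg fun i (_ : i ∈ Finset.univ) => hD i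
  by_contra hle
  push Not at hle
  have hE0 : ∑ i, ∑ j ∈ Finset.univ.erase i, edgeEnergy (A i j) (u i) (u j) = 0 := by
    linarith
  have hD0 : ∑ i, u i ⬝ᵥ (inDeg A i - outDeg A i + (2 : ℝ) • δi i • B i) *ᵥ u i = 0 := by
    linarith
  rw [Finset.sum_eq_zero_iff_of_nonneg fun i _ => Finset.sum_nonneg (hE i)] at hE0
  rw [Finset.sum_eq_zero_iff_of_nonneg fun i _ => hD i] at hD0
  have hE0' : ∀ i j, i ≠ j → edgeEnergy (A i j) (u i) (u j) ≤ 0 := by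
    intro i j hij
    have h1 := hE0 i (Finset.mem_univ i)
    rw [Finset.sum_eq_zero_iff_of_nonneg (hE i)] at h1
    exact (h1 j (Finset.mem_erase.2 ⟨hij.symm, Finset.mem_univ j⟩)).le
  have hu1 : ∀ i ∈ V1, u i = 0 := fun i hi =>
    pd_form_eq_zero (hV1 i hi) (hD0 i (Finset.mem_univ i)).le
  have hu0 : ∀ i, u i = 0 := by
    intro j
    rcases hcover j with hj | hj
    · exact hu1 j hj
    · obtain ⟨i, hi, hp⟩ := hpath j hj
      exact eq_zero_of_PNPath hE0' hp (hu1 i hi)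
  exact hy (funext fun p => congrFun (hu0 p.1) p.2)
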